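/- arXiv:1908.01658 — 2 statements merged into one kernel-verified Lean document; each statement's English description precedes it below -/
import Mathlib

section
/- Let B be an abelian category and A a full abelian subcategory of B that is closed under short exact sequences and closed under subobjects and quotient objects of its objects, let M be a commutative monoid, and let v be an M-valued volume on A. If f : X → Y and g : Y → Z are morphisms of B that are Fredholm with respect to v, then the composite g∘f is Fredholm with respect to v and Ind(g∘f) = Ind(g)·Ind(f) in M. -/
open CategoryTheory Limits

universe v u

variable {B : Type u} [Category.{v} B] [Abelian B] {M : Type*} [CommMonoid M]

/-- The index of a morphism whose kernel has invertible volume: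
`Ind(f) = v(Cok f) · v(Ker f)⁻¹`. -/
noncomputable def fredholmIndex (v : B → M) {X Y : B} (f : X ⟶ Y)
    (h : IsUnit (v (kernel f))) : M :=
  v (cokernel f) * ↑h.unit⁻¹

section
variable (P : B → Prop) (v : B → M)

/-- A morphism is Fredholm with respect to the volume `v` (defined on the subcategory of
objects satisfying `P`) if its kernel and cokernel lie in the subcategory and have
invertible volume. -/
def IsFredholm {X Y : B} (f : X ⟶ Y) : Prop :=
  P (kernel f) ∧ IsUnit (v (kernel f)) ∧ P (cokernel f) ∧ IsUnit (v (cokernel f))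

/-- A morphism is finite with respect to the volume `v` if its image lies in the
subcategory and has invertible volume. -/
def IsFiniteMor {X Y : B} (f : X ⟶ Y) : Prop :=
  P (image f) ∧ IsUnit (v (image f))

/-- The closure and volume axioms: `P` cuts out a full abelian subcategory closed under
subobjects, quotient objects and short exact sequences, and `v` is an `M`-valued volume
on it. -/
def VolumeAxioms : Prop :=
  (∀ ⦃X Y : B⦄, (X ≅ Y) → P X → P Y) ∧
  (∀ X : B, IsZero X → P X) ∧
  (∀ ⦃X Y : B⦄ (f : X ⟶ Y), Mono f → P Y → P X) ∧
  (∀ ⦃X Y : B⦄ (f : X ⟶ Y), Epi f → P X → P Y) ∧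
  (∀ S : ShortComplex B, S.ShortExact → P S.X₁ → P S.X₃ → P S.X₂) ∧
  (∀ X : B, IsZero X → v X = 1) ∧
  (∀ S : ShortComplex B, S.ShortExact → P S.X₁ → P S.X₂ → P S.X₃ →
    v S.X₂ = v S.X₁ * v S.X₃)
end

/-- An exact pair `A ⟶ B ⟶ C` yields a short exact sequence `ker f ⟶ A ⟶ ker g`. -/
theorem shortExact_ker_of_exact (S : ShortComplex B) (hS : S.Exact) :
    (ShortComplex.mk (kernel.ι S.f) (kernel.lift S.g S.f S.zero)
      (by rw [← cancel_mono (kernel.ι S.g)]; simp)).ShortExact := by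
  have hepi : Epi (kernel.lift S.g S.f S.zero) := hS.epi_kernelLift
  refine ShortComplex.ShortExact.mk' ?_ inferInstance hepi
  refine ShortComplex.exact_of_f_is_kernel _ ?_
  refine KernelFork.IsLimit.ofι' _ _ (fun {A} k hk => ⟨kernel.lift S.f k ?_, ?_⟩)
  · have := congrArg (fun t => t ≫ kernel.ι S.g) hk
    simpa using this
  · simp

theorem volume_of_exact {P : B → Prop} {v : B → M} (hax : VolumeAxioms P v)
    {X Y Z : B} (f : X ⟶ Y) (g : Y ⟶ Z) (w : f ≫ g = 0)
    (hS : (ShortComplex.mk f g w).Exact) :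
    (P X → P (kernel f) ∧ P (kernel g) ∧ v X = v (kernel f) * v (kernel g)) ∧
    (P (kernel f) → P (kernel g) → P X) := by
  obtain ⟨_, _, hsub, hquo, hext, _, hv⟩ := hax
  have hse := shortExact_ker_of_exact _ hS
  constructor
  · intro hX
    have h1 : P (kernel f) := hsub (kernel.ι f) inferInstance hX
    have h2 : P (kernel g) := hquo _ hse.epi_g hX
    exact ⟨h1, h2, hv _ hse h1 hX h2⟩
  · intro h1 h2
    exact hext _ hse h1 h2

theorem fredholmIndex_eq (v : B → M) {X Y : B} (f : X ⟶ Y) (h : IsUnit (v (kernel f)))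
    (c k : Mˣ) (hc : v (cokernel f) = c) (hk : v (kernel f) = k) :
    fredholmIndex v f h = ((c * k⁻¹ : Mˣ) : M) := by
  have : h.unit = k := Units.ext (by simpa using hk)
  rw [fredholmIndex, this, hc, Units.val_mul]

theorem comm_group_aux {G : Type*} [CommGroup G] (ke c3 kb kd kc : G) :
    ke * c3 * (kb * kd)⁻¹ = c3 * (kd * kc)⁻¹ * (kc * ke * kb⁻¹) := by
  rw [mul_inv, mul_inv]
  calc ke * c3 * (kb⁻¹ * kd⁻¹) = c3 * kd⁻¹ * (ke * kb⁻¹) * (kc⁻¹ * kc) := by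
        simp only [inv_mul_cancel, mul_one]
        simp only [mul_comm, mul_left_comm, mul_assoc]
    _ = _ := by simp only [mul_comm, mul_left_comm, mul_assoc]

/-- Fredholm morphisms (with respect to a volume on an abelian
subcategory closed under short exact sequences, subobjects and quotients) are closed
under composition, and the index is multiplicative: `Ind(g∘f) = Ind(g)·Ind(f)`. -/
theorem fredholm_comp
    (P : B → Prop) (v : B → M) (hax : VolumeAxioms P v)
    {X Y Z : B} (f : X ⟶ Y) (g : Y ⟶ Z)
    (hf : IsFredholm P v f) (hg : IsFredholm P v g) :
    ∃ hfg : IsFredholm P v (f ≫ g),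
      fredholmIndex v (f ≫ g) hfg.2.1 =
        fredholmIndex v g hg.2.1 * fredholmIndex v f hf.2.1 := by
  have hE := kernelCokernelCompSequence_exact f g
  let a := kernel.map f (f ≫ g) (𝟙 _) g (by simp)
  let b := kernel.map (f ≫ g) g f (𝟙 _) (by simp)
  let d := kernelCokernelCompSequence.δ f g
  let c := cokernel.map f (f ≫ g) (𝟙 _) g (by simp)
  let e := cokernel.map (f ≫ g) g f (𝟙 _) (by simp)
  have ha : Mono a := inferInstanceAs (Mono ((kernelCokernelCompSequence f g).map' 0 1))
  have he : Epi e := inferInstanceAs (Epi ((kernelCokernelCompSequence f g).map' 4 5))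
  obtain ⟨L1, _⟩ := volume_of_exact hax a b _ (hE.exact 0)
  obtain ⟨L2, L2'⟩ := volume_of_exact hax b d _ (hE.exact 1)
  obtain ⟨L3, _⟩ := volume_of_exact hax d c _ (hE.exact 2)
  obtain ⟨L4, _⟩ := volume_of_exact hax c e _ (hE.exact 3)
  have hse : (ShortComplex.mk (kernel.ι e) e (kernel.condition e)).ShortExact :=
    ShortComplex.ShortExact.mk' (ShortComplex.exact_of_f_is_kernel _ (kernelIsKernel e))
      inferInstance he
  obtain ⟨hf1, hf2, hf3, hf4⟩ := hf
  obtain ⟨hg1, hg2, hg3, hg4⟩ := hg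
  obtain ⟨_, pb, v1⟩ := L1 hf1
  obtain ⟨pd, pc, v3⟩ := L3 hg1
  obtain ⟨_, pe, v4⟩ := L4 hf3
  have p2 : P (kernel (f ≫ g)) := L2' pb pd
  obtain ⟨_, _, v2⟩ := L2 p2
  have p5 : P (cokernel (f ≫ g)) := hax.2.2.2.2.1 _ hse pe hg3
  have v5 : v (cokernel (f ≫ g)) = v (kernel e) * v (cokernel g) :=
    hax.2.2.2.2.2.2 _ hse pe p5 hg3
  have v0 : v (kernel a) = 1 := hax.2.2.2.2.2.1 _ (isZero_kernel_of_mono a)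
  rw [v0, one_mul] at v1
  have ub : IsUnit (v (kernel b)) := v1 ▸ hf2
  have hg2' := hg2
  rw [v3] at hg2'
  have hf4' := hf4
  rw [v4] at hf4'
  obtain ⟨kb, hkb⟩ := ub
  obtain ⟨kd, hkd⟩ := isUnit_of_mul_isUnit_left hg2'
  obtain ⟨kc, hkc⟩ := isUnit_of_mul_isUnit_right hg2'
  obtain ⟨ke, hke⟩ := isUnit_of_mul_isUnit_right hf4'
  obtain ⟨c3, hc3⟩ := id hg4
  rw [← hkb] at v1 v2
  rw [← hkd] at v2 v3
  rw [← hkc] at v3 v4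
  rw [← hke] at v4 v5
  rw [← hc3] at v5
  rw [← Units.val_mul] at v2 v3 v4 v5
  refine ⟨⟨p2, v2 ▸ Units.isUnit _, p5, v5 ▸ Units.isUnit _⟩, ?_⟩
  rw [fredholmIndex_eq v (f ≫ g) _ _ _ v5 v2, fredholmIndex_eq v g _ _ _ hc3.symm v3,
    fredholmIndex_eq v f _ _ _ v4 v1, ← Units.val_mul]
  congr 1
  exact comm_group_aux ke c3 kb kd kc
end

section
/- Let B be an abelian category and A a full abelian subcategory of B that is closed under short exact sequences and closed under subobjects and quotient objects of its objects, let M be a commutative monoid, and let v be an M-valued volume on A. Let f, k : X → Y be morphisms in B such that f is Fredholm with respect to v and k is finite with respect to v. Then the sum f + k (in the additive structure of B) is Fredholm with respect to v and Ind(f + k) = Ind(f) in M. -/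
open CategoryTheory Limits

universe v u

variable {B : Type u} [Category.{v} B] [Abelian B] {M : Type*} [CommMonoid M]

theorem shortExact_image_aux (S : ShortComplex B) (hS : S.Exact)
    (w : image.ι S.f ≫ factorThruImage S.g = 0) :
    (ShortComplex.mk (image.ι S.f) (factorThruImage S.g) w).ShortExact := by
  have w' : image.ι S.f ≫ S.g = 0 := by
    rw [← image.fac S.g, reassoc_of% w, zero_comp]
  let S' := ShortComplex.mk (image.ι S.f) S.g w'
  let φ : S ⟶ S' :=
    { τ₁ := factorThruImage S.f, τ₂ := 𝟙 _, τ₃ := 𝟙 _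
      comm₁₂ := by simp [S']
      comm₂₃ := by simp [S'] }
  let ψ : ShortComplex.mk (image.ι S.f) (factorThruImage S.g) w ⟶ S' :=
    { τ₁ := 𝟙 _, τ₂ := 𝟙 _, τ₃ := image.ι S.g
      comm₁₂ := by simp [S']
      comm₂₃ := by simp [S'] }
  have : Epi φ.τ₁ := inferInstanceAs (Epi (factorThruImage S.f))
  have : IsIso φ.τ₂ := inferInstanceAs (IsIso (𝟙 _))
  have : Mono φ.τ₃ := inferInstanceAs (Mono (𝟙 _))
  have : Epi ψ.τ₁ := inferInstanceAs (Epi (𝟙 _))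
  have : IsIso ψ.τ₂ := inferInstanceAs (IsIso (𝟙 _))
  have : Mono ψ.τ₃ := inferInstanceAs (Mono (image.ι S.g))
  have h1 : S'.Exact := (ShortComplex.exact_iff_of_epi_of_isIso_of_mono φ).1 hS
  have h2 := (ShortComplex.exact_iff_of_epi_of_isIso_of_mono ψ).2 h1
  exact { exact := h2
          mono_f := inferInstanceAs (Mono (image.ι S.f))
          epi_g := inferInstanceAs (Epi (factorThruImage S.g)) }

theorem image_w_aux (S : ShortComplex B) : image.ι S.f ≫ factorThruImage S.g = 0 := by
  rw [← cancel_epi (factorThruImage S.f), ← cancel_mono (image.ι S.g)]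
  simp

theorem vol_exact_aux {P : B → Prop} {v : B → M} (hax : VolumeAxioms P v)
    (S : ShortComplex B) (hS : S.Exact) (h2 : P S.X₂) :
    P (image S.f) ∧ P (image S.g) ∧ v S.X₂ = v (image S.f) * v (image S.g) := by
  obtain ⟨_, _, hsub, hquot, _, _, hv⟩ := hax
  have a := hsub (image.ι S.f) inferInstance h2
  have b := hquot (factorThruImage S.g) inferInstance h2
  exact ⟨a, b, hv _ (shortExact_image_aux S hS (image_w_aux S)) a h2 b⟩

theorem P_exact_aux {P : B → Prop} {v : B → M} (hax : VolumeAxioms P v)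
    (S : ShortComplex B) (hS : S.Exact) (h1 : P S.X₁) (h3 : P S.X₃) : P S.X₂ := by
  obtain ⟨_, _, hsub, hquot, hext, _, _⟩ := hax
  exact hext (ShortComplex.mk _ _ (image_w_aux S)) (shortExact_image_aux S hS (image_w_aux S))
    (hquot (factorThruImage S.f) inferInstance h1) (hsub (image.ι S.g) inferInstance h3)

open ZeroObject in
theorem vol_iso_aux {P : B → Prop} {v : B → M} (hax : VolumeAxioms P v)
    {X Y : B} (e : X ≅ Y) (hX : P X) : P Y ∧ v X = v Y := by
  obtain ⟨hiso, hz, _, _, _, hv0, hv⟩ := hax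
  have hY := hiso e hX
  refine ⟨hY, ?_⟩
  have hse : (ShortComplex.mk e.hom (0 : Y ⟶ 0) comp_zero).ShortExact :=
    { exact := (ShortComplex.exact_iff_epi _ rfl).2 (inferInstanceAs (Epi e.hom))
      mono_f := inferInstanceAs (Mono e.hom)
      epi_g := ⟨fun _ _ _ => (isZero_zero B).eq_of_src _ _⟩ }
  have := hv _ hse hX hY (hz _ (isZero_zero B))
  dsimp at this
  rw [this, hv0 _ (isZero_zero B), mul_one]

/-- A subobject-and-quotient version: volume of an object as volume of kernel times image. -/
theorem unit_image_left_aux {P : B → Prop} {v : B → M} (hax : VolumeAxioms P v)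
    {X Y : B} (f : X ⟶ Y) (hX : P X) (hu : IsUnit (v X)) : IsUnit (v (image f)) := by
  have := (vol_exact_aux hax (ShortComplex.mk (kernel.ι f) f (kernel.condition f))
    (ShortComplex.exact_kernel f) hX).2.2
  dsimp at this
  rw [this] at hu
  exact isUnit_of_mul_isUnit_right hu

theorem unit_image_right_aux {P : B → Prop} {v : B → M} (hax : VolumeAxioms P v)
    {X Y : B} (f : X ⟶ Y) (hY : P Y) (hu : IsUnit (v Y)) : IsUnit (v (image f)) := by
  have := (vol_exact_aux hax (ShortComplex.mk f (cokernel.π f) (cokernel.condition f))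
    (ShortComplex.exact_cokernel f) hY).2.2
  dsimp at this
  rw [this] at hu
  exact isUnit_of_mul_isUnit_left hu

theorem unit_exact_aux {P : B → Prop} {v : B → M} (hax : VolumeAxioms P v)
    (S : ShortComplex B) (hS : S.Exact) (h1 : P S.X₁) (h3 : P S.X₃)
    (u1 : IsUnit (v S.X₁)) (u3 : IsUnit (v S.X₃)) : P S.X₂ ∧ IsUnit (v S.X₂) := by
  have h2 := P_exact_aux hax S hS h1 h3
  refine ⟨h2, ?_⟩
  rw [(vol_exact_aux hax S hS h2).2.2]
  exact (unit_image_left_aux hax S.f h1 u1).mul (unit_image_right_aux hax S.g h3 u3)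

theorem vol_image_mono_aux {P : B → Prop} {v : B → M} (hax : VolumeAxioms P v)
    {X Y : B} (f : X ⟶ Y) [Mono f] (hX : P X) : v (image f) = v X :=
  (vol_iso_aux hax (imageMonoIsoSource f).symm hX).2.symm

theorem vol_image_epi_aux {P : B → Prop} {v : B → M} (hax : VolumeAxioms P v)
    {X Y : B} (f : X ⟶ Y) [Epi f] (hY : P Y) : v (image f) = v Y := by
  have : Epi (image.ι f) := epi_of_epi_fac (image.fac f)
  have : IsIso (image.ι f) := isIso_of_mono_of_epi _
  exact (vol_iso_aux hax (asIso (image.ι f)).symm hY).2.symm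

/-- Five-term exact sequence `0 → A₁ → A₂ → A₃ → A₄ → A₅ → 0` of objects. -/
theorem fredholm_comp_aux {P : B → Prop} {v : B → M} (hax : VolumeAxioms P v)
    {K X Y : B} (j : K ⟶ X) [Mono j] (g : X ⟶ Y)
    (hc : P (cokernel j)) (uc : IsUnit (v (cokernel j))) :
    (IsFredholm P v g → IsFredholm P v (j ≫ g)) ∧
    (IsFredholm P v (j ≫ g) → IsFredholm P v g) ∧
    (IsFredholm P v g → v (kernel (j ≫ g)) * v (cokernel j) * v (cokernel g) =
      v (kernel g) * v (cokernel (j ≫ g))) := by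
  let T := kernelCokernelCompSequence.snakeInput j g
  let a : kernel (j ≫ g) ⟶ kernel g := T.L₀.g
  let d : kernel g ⟶ cokernel j := T.δ
  let b : cokernel j ⟶ cokernel (j ≫ g) := T.L₃.f
  let c : cokernel (j ≫ g) ⟶ cokernel g := T.L₃.g
  have e1 : (ShortComplex.mk a d T.L₀_g_δ).Exact := T.L₁'_exact
  have e2 : (ShortComplex.mk d b T.δ_L₃_f).Exact := T.L₂'_exact
  have e3 : (ShortComplex.mk b c T.L₃.zero).Exact := T.L₃_exact
  have : Mono a := by
    have : a ≫ kernel.ι g = kernel.ι (j ≫ g) ≫ j := kernel.lift_ι _ _ _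
    have : Mono (a ≫ kernel.ι g) := by rw [this]; infer_instance
    exact mono_of_mono a (kernel.ι g)
  have : Epi c := by
    have : cokernel.π (j ≫ g) ≫ c = 𝟙 _ ≫ cokernel.π g := cokernel.π_desc _ _ _
    have : Epi (cokernel.π (j ≫ g) ≫ c) := by rw [this]; infer_instance
    exact epi_of_epi (cokernel.π (j ≫ g)) c
  have hsub := hax.2.2.1
  have hquot := hax.2.2.2.1
  have f1 : IsFredholm P v g → IsFredholm P v (j ≫ g) := by
    rintro ⟨p1, u1, p2, u2⟩
    have q := unit_exact_aux hax _ e3 hc p2 uc u2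
    have pk := hsub a inferInstance p1
    refine ⟨pk, ?_, q.1, q.2⟩
    rw [← vol_image_mono_aux hax a pk]
    exact unit_image_right_aux hax a p1 u1
  refine ⟨f1, ?_, ?_⟩
  · rintro ⟨p1, u1, p2, u2⟩
    have q := unit_exact_aux hax _ e1 p1 hc u1 uc
    have pk := hquot c inferInstance p2
    refine ⟨q.1, q.2, pk, ?_⟩
    rw [← vol_image_epi_aux hax c pk]
    exact unit_image_left_aux hax c p2 u2
  · intro hg
    obtain ⟨p1, _, p2, _⟩ := f1 hg
    have v1 := (vol_exact_aux hax _ e1 hg.1).2.2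
    have v2 := (vol_exact_aux hax _ e2 hc).2.2
    have v3 := (vol_exact_aux hax _ e3 p2).2.2
    dsimp only at v1 v2 v3
    rw [vol_image_mono_aux hax a p1] at v1
    rw [vol_image_epi_aux hax c hg.2.2.1] at v3
    rw [v1, v2, v3]
    simp only [mul_assoc]

/-- The Fredholm property and the index are invariant under finite
perturbations: if `f` is Fredholm and `k` is finite with respect to the volume `v`, then
`f + k` is Fredholm and `Ind(f + k) = Ind(f)`. -/
theorem fredholm_index_invariant_under_finite_perturbation
    (P : B → Prop) (v : B → M) (hax : VolumeAxioms P v)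
    {X Y : B} (f k : X ⟶ Y)
    (hf : IsFredholm P v f) (hk : IsFiniteMor P v k) :
    ∃ hfk : IsFredholm P v (f + k),
      fredholmIndex v (f + k) hfk.2.1 = fredholmIndex v f hf.2.1 := by
  have hj := vol_iso_aux hax (Abelian.coimageIsoImage' k).symm hk.1
  have hc : P (cokernel (kernel.ι k)) := hj.1
  have uc : IsUnit (v (cokernel (kernel.ι k))) := by
    have h2 := hk.2
    rw [hj.2] at h2
    exact h2
  obtain ⟨f1, _, f3⟩ := fredholm_comp_aux hax (kernel.ι k) f hc uc
  obtain ⟨_, g2, g3⟩ := fredholm_comp_aux hax (kernel.ι k) (f + k) hc uc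
  have heq : kernel.ι k ≫ (f + k) = kernel.ι k ≫ f := by simp
  have hjf := f1 hf
  rw [heq] at g2 g3
  have hfk := g2 hjf
  refine ⟨hfk, ?_⟩
  have E1 := f3 hf
  have E2 := g3 hfk
  have key : v (cokernel (f + k)) * v (kernel f) = v (cokernel f) * v (kernel (f + k)) := by
    apply (hjf.2.1.mul uc).mul_left_cancel
    rw [← mul_assoc, ← mul_assoc, E1, E2]
    ac_rfl
  unfold fredholmIndex
  rw [Units.mul_inv_eq_iff_eq_mul, mul_right_comm, Units.eq_mul_inv_iff_mul_eq]
  exact key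
end
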